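/- arXiv:1111.2153 — 5 statements merged into one kernel-verified Lean document; each statement's English description precedes it below -/
import Mathlib

section
/- First integral of equation (B4): Suppose f, h are twice-differentiable functions on an open interval I ⊆ ℝ with f > 0 and h > 0 on I, satisfying h''/h − f'h'/(fh) + f²/h⁴ = 0 on I. Then the function t ↦ 1/h(t)² − h'(t)²/f(t)² is constant on I. Equivalently, there exists a constant a ∈ ℝ such that f(t)²·(1 − a·h(t)²) = h(t)²·h'(t)² for all t ∈ I. -/
/-! The derivative of `1/h² − h'²/f²` is `−2 h h'/f²` times the left-hand side of the equation,
hence zero, and an interval is preconnected, so this function is constant. The second form follows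
by multiplying through by `f² h²`. -/

/-- First integral of equation (B4): if `h''/h − f'h'/(fh) + f²/h⁴ = 0` on an open
interval `I` with `f, h > 0`, then `1/h² − h'²/f²` is constant on `I`; equivalently
there is a constant `a` with `f²(1 − a h²) = h² h'²` on `I`. -/
theorem einstein_B4_first_integral (I : Set ℝ) (hI : IsOpen I) (hI' : I.OrdConnected)
    (f h : ℝ → ℝ)
    (hfpos : ∀ t ∈ I, 0 < f t) (hhpos : ∀ t ∈ I, 0 < h t)
    (hfd : ∀ t ∈ I, DifferentiableAt ℝ f t)
    (hhd : ∀ t ∈ I, DifferentiableAt ℝ h t)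
    (hhd' : ∀ t ∈ I, DifferentiableAt ℝ (deriv h) t)
    (heq : ∀ t ∈ I,
      deriv (deriv h) t / h t - deriv f t * deriv h t / (f t * h t)
        + f t ^ 2 / h t ^ 4 = 0) :
    ∃ a : ℝ,
      (∀ t ∈ I, 1 / h t ^ 2 - deriv h t ^ 2 / f t ^ 2 = a) ∧
      (∀ t ∈ I, f t ^ 2 * (1 - a * h t ^ 2) = h t ^ 2 * deriv h t ^ 2) := by
  have hder : ∀ t ∈ I,
      HasDerivAt (fun t => 1 / h t ^ 2 - deriv h t ^ 2 / f t ^ 2) 0 t := by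
    intro t ht
    have hf0 : f t ≠ 0 := (hfpos t ht).ne'
    have hh0 : h t ≠ 0 := (hhpos t ht).ne'
    have hf1 := (hfd t ht).hasDerivAt
    have hh1 := (hhd t ht).hasDerivAt
    have hh2 := (hhd' t ht).hasDerivAt
    have key := ((hasDerivAt_const t (1 : ℝ)).fun_div (hh1.fun_pow 2) (pow_ne_zero 2 hh0)).fun_sub
      ((hh2.fun_pow 2).fun_div (hf1.fun_pow 2) (pow_ne_zero 2 hf0))
    refine key.congr_deriv ?_
    have hfactor := congrArg (fun x => -(2 * h t * deriv h t / f t ^ 2) * x) (heq t ht)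
    simp only [mul_zero] at hfactor
    refine Eq.trans ?_ hfactor
    field_simp
    ring
  obtain ⟨a, ha⟩ := hI.exists_is_const_of_deriv_eq_zero hI'.isPreconnected
    (fun t ht => (hder t ht).differentiableAt.differentiableWithinAt)
    (fun t ht => (hder t ht).deriv)
  refine ⟨a, ha, fun t ht => ?_⟩
  have hf0 : f t ≠ 0 := (hfpos t ht).ne'
  have hh0 : h t ≠ 0 := (hhpos t ht).ne'
  rw [← ha t ht]
  field_simp
  ring
end

section
/- Nonexistence in the case a = 0, λ = 6, C < 0: There do not exist real numbers z₁, z₂ with 0 < z₁ < z₂, a real number D > 0, and a positive integer n such that z₁⁴ − z₁⁶ = D, z₂⁴ − z₂⁶ = D, 2 − 4z₁² + 2D·z₁^{−4} = n, and 2 − 4z₂² + 2D·z₂^{−4} = −n. (Indeed, the derivative conditions force z₁² = (4−n)/6 and z₂² = (4+n)/6, and then the equality (4−n)²(2+n) = (4+n)²(2−n), which holds only for n = 0.) Hence there are no complete Einstein metrics in this case. -/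
/-!
At a positive root `z` of `s⁴ - s⁶ - D` one has `D / z⁴ = 1 - z²`, so the derivative conditions
become linear in `z²` and give `z₁² = (4 - n) / 6` and `z₂² = (4 + n) / 6`. Equating the two values
of `z⁴ - z⁶` yields `(4 - n)²(2 + n) = (4 + n)²(2 - n)`, that is `2n³ = 0`, contradicting `n > 0`.
-/

/-- Nonexistence in the case `a = 0`, `λ = 6`, `C < 0`: there are no
`0 < z₁ < z₂`, `D > 0` and positive integer `n` with `z₁⁴ − z₁⁶ = D`,
`z₂⁴ − z₂⁶ = D`, `2 − 4z₁² + 2D/z₁⁴ = n` and `2 − 4z₂² + 2D/z₂⁴ = −n`.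
Hence there are no complete Einstein metrics in this case. -/
theorem no_complete_einstein_a_zero_lambda_pos_C_neg :
    ¬ ∃ (z₁ z₂ D : ℝ) (n : ℤ),
      0 < z₁ ∧ z₁ < z₂ ∧ 0 < D ∧ 0 < n ∧
      z₁ ^ 4 - z₁ ^ 6 = D ∧
      z₂ ^ 4 - z₂ ^ 6 = D ∧
      2 - 4 * z₁ ^ 2 + 2 * D / z₁ ^ 4 = (n : ℝ) ∧
      2 - 4 * z₂ ^ 2 + 2 * D / z₂ ^ 4 = -(n : ℝ) := by
  rintro ⟨z₁, z₂, D, n, hz₁, hz, -, hn, h₁, h₂, d₁, d₂⟩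
  have hz₂ : 0 < z₂ := hz₁.trans hz
  have hn' : (0 : ℝ) < n := by exact_mod_cast hn
  -- Since `D / z⁴ = 1 - z²` at a root, the derivative there is `4 - 6z²`.
  have q₁ : 2 * D / z₁ ^ 4 = 2 * (1 - z₁ ^ 2) := by
    rw [← h₁]; field_simp
  have q₂ : 2 * D / z₂ ^ 4 = 2 * (1 - z₂ ^ 2) := by
    rw [← h₂]; field_simp
  have e₁ : z₁ ^ 2 = (4 - n) / 6 := by linarith
  have e₂ : z₂ ^ 2 = (4 + n) / 6 := by linarith
  have k : (z₁ ^ 2) ^ 2 - (z₁ ^ 2) ^ 3 = (z₂ ^ 2) ^ 2 - (z₂ ^ 2) ^ 3 := by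
    linear_combination h₁ - h₂
  rw [e₁, e₂] at k
  -- `(4 - n)²(2 + n) - (4 + n)²(2 - n) = 2n³`.
  have c : (n : ℝ) ^ 3 = 0 := by linear_combination 108 * k
  exact (pow_pos hn' 3).ne' c
end

section
/- Formula for λ from the smoothness condition at a root of G: Let a ∈ {−1, 1}, C, λ ∈ ℝ, n ∈ ℤ, and let z > 0 satisfy z⁸ + 2az⁶ − 2az² − 1 ≠ 0, G(z²) = 0, and the derivative condition ((24 + 3C − 8aλ)(2z⁶ + 3az⁴) + 48z² + a(24 − 3C − 8aλ)) / (24z²) = n, where G(x) = (24 + 3C − 8aλ)(x⁴ + 2ax³) + 48x² + (24 − 3C − 8aλ)(2ax + 1). Then λ = ((2 + n)z⁴ + 4az² + (2 − n)) / (2z²). -/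
/-!
Put `x = z²`, `P = 24 + 3C − 8aλ`, `Q = 24 − 3C − 8aλ`. Both conditions are linear in `(P, Q)`:
`P A + Q B = −48x²` and `P E + Q a = 24nx − 48x`, where `A = x⁴ + 2ax³`, `B = 2ax + 1`,
`E = 2x³ + 3ax²`. Since `a² = 1`, the determinant is `−3a x² (x + a)²`, and Cramer's rule gives
`P + Q = 48 − 16aλ`, hence `λ`. The determinant is nonzero because
`x⁴ + 2ax³ − 2ax − 1 = (x + a)³ (x − a)` does not vanish.
-/

/-- Formula for `λ` from the smoothness condition at a root of `G`: if `z > 0` with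
`z⁸ + 2az⁶ − 2az² − 1 ≠ 0` satisfies `G(z²) = 0` and the derivative condition
`((24+3C−8aλ)(2z⁶+3az⁴) + 48z² + a(24−3C−8aλ))/(24z²) = n`, then
`λ = ((2+n)z⁴ + 4az² + (2−n))/(2z²)`. -/
theorem lambda_value_at_root (a C lam z : ℝ) (n : ℤ) (ha : a = -1 ∨ a = 1)
    (hz : 0 < z)
    (hden : z ^ 8 + 2 * a * z ^ 6 - 2 * a * z ^ 2 - 1 ≠ 0)
    (hroot : (24 + 3 * C - 8 * a * lam) * ((z ^ 2) ^ 4 + 2 * a * (z ^ 2) ^ 3)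
      + 48 * (z ^ 2) ^ 2 + (24 - 3 * C - 8 * a * lam) * (2 * a * z ^ 2 + 1) = 0)
    (hderiv : ((24 + 3 * C - 8 * a * lam) * (2 * z ^ 6 + 3 * a * z ^ 4)
      + 48 * z ^ 2 + a * (24 - 3 * C - 8 * a * lam)) / (24 * z ^ 2) = (n : ℝ)) :
    lam = ((2 + (n : ℝ)) * z ^ 4 + 4 * a * z ^ 2 + (2 - (n : ℝ))) / (2 * z ^ 2) := by
  have hz2 : z ^ 2 ≠ 0 := by positivity
  have hxa : z ^ 2 + a ≠ 0 := by
    intro h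
    apply hden
    have hfac : z ^ 8 + 2 * a * z ^ 6 - 2 * a * z ^ 2 - 1
        = (z ^ 2 + a) ^ 3 * (z ^ 2 - a) := by
      rcases ha with rfl | rfl <;> ring
    rw [hfac, h]
    ring
  rw [div_eq_iff (by positivity)] at hderiv
  rw [eq_div_iff (by positivity)]
  have hk : 24 * z ^ 2 * (z ^ 2 + a) ^ 2 ≠ 0 :=
    mul_ne_zero (mul_ne_zero (by norm_num) hz2) (pow_ne_zero 2 hxa)
  apply mul_left_cancel₀ hk
  -- The coefficients `a − E` and `A − B` are those of Cramer's rule for `P + Q`.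
  rcases ha with rfl | rfl
  · linear_combination (-1 - (2 * z ^ 6 - 3 * z ^ 4)) * hroot
      + (z ^ 8 - 2 * z ^ 6 + 2 * z ^ 2 - 1) * hderiv
  · linear_combination (1 - (2 * z ^ 6 + 3 * z ^ 4)) * hroot
      + (z ^ 8 + 2 * z ^ 6 - 2 * z ^ 2 - 1) * hderiv
end

section
/- Positivity identity in the case a = −1: For all real C, λ and all real x, one has the identity (24 + 3C + 8λ)(x⁴ − 2x³) + 48x² + (24 − 3C + 8λ)(−2x + 1) = (24 + 3C + 8λ)(x² − x)² − 16λx² + (24 − 3C + 8λ)(x − 1)². Consequently, if λ ≤ 0, C ≥ 0, and 24 − 3C + 8λ > 0, then G(x) > 0 for every x > 0 with x ≠ 1, where G(x) = (24 + 3C + 8λ)(x⁴ − 2x³) + 48x² + (24 − 3C + 8λ)(−2x + 1). -/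
/-- Positivity identity in the case `a = −1`: for all real `C`, `λ`, `x`,
`(24+3C+8λ)(x⁴−2x³) + 48x² + (24−3C+8λ)(−2x+1)
  = (24+3C+8λ)(x²−x)² − 16λx² + (24−3C+8λ)(x−1)²`.
Consequently if `λ ≤ 0`, `C ≥ 0` and `24 − 3C + 8λ > 0`, then `G(x) > 0` for every
`x > 0` with `x ≠ 1`. -/
theorem positivity_identity_a_neg_one :
    (∀ C lam x : ℝ,
      (24 + 3 * C + 8 * lam) * (x ^ 4 - 2 * x ^ 3) + 48 * x ^ 2
        + (24 - 3 * C + 8 * lam) * (-2 * x + 1)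
      = (24 + 3 * C + 8 * lam) * (x ^ 2 - x) ^ 2 - 16 * lam * x ^ 2
        + (24 - 3 * C + 8 * lam) * (x - 1) ^ 2) ∧
    (∀ C lam : ℝ, lam ≤ 0 → 0 ≤ C → 0 < 24 - 3 * C + 8 * lam →
      ∀ x : ℝ, 0 < x → x ≠ 1 →
        0 < (24 + 3 * C + 8 * lam) * (x ^ 4 - 2 * x ^ 3) + 48 * x ^ 2
          + (24 - 3 * C + 8 * lam) * (-2 * x + 1)) := by
  have key : ∀ C lam x : ℝ,
      (24 + 3 * C + 8 * lam) * (x ^ 4 - 2 * x ^ 3) + 48 * x ^ 2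
        + (24 - 3 * C + 8 * lam) * (-2 * x + 1)
      = (24 + 3 * C + 8 * lam) * (x ^ 2 - x) ^ 2 - 16 * lam * x ^ 2
        + (24 - 3 * C + 8 * lam) * (x - 1) ^ 2 := by
    intro C lam x
    ring
  refine ⟨key, fun C lam hlam hC hpos x _ hx1 => ?_⟩
  rw [key]
  -- The first two summands are nonnegative; the last is positive because `x ≠ 1`.
  have h1 : 0 ≤ (24 + 3 * C + 8 * lam) * (x ^ 2 - x) ^ 2 :=
    mul_nonneg (by linarith) (sq_nonneg _)
  have h2 : 0 ≤ -lam * x ^ 2 := mul_nonneg (by linarith) (sq_nonneg _)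
  have h3 : 0 < (24 - 3 * C + 8 * lam) * (x - 1) ^ 2 :=
    mul_pos hpos (sq_pos_of_ne_zero (sub_ne_zero.mpr hx1))
  linarith
end

section
/- Root counting in the case a = −1, 24 + 3C + 8λ < 0, C ≥ 0: Let C ≥ 0 and λ ∈ ℝ with 24 + 3C + 8λ < 0, and let G(x) = (24 + 3C + 8λ)(x⁴ − 2x³) + 48x² + (24 − 3C + 8λ)(−2x + 1). Then G(0) < 0, G(1) = −16λ > 0, and G(x) → −∞ as x → ∞; moreover G has exactly two positive roots x₁, x₂, with x₁ ∈ (0, 1) and x₂ ∈ (1, ∞). That is, the set {x ∈ ℝ : x > 0 and G(x) = 0} has exactly two elements, one in (0,1) and one in (1,∞). -/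
/-!
Put `p = -(24 + 3C + 8λ) > 0` and `q = -(24 - 3C + 8λ) = p + 6C > 0`, so that
`G x = p (2x³ - x⁴) + 48x² + q (2x - 1)`. Then `G 0 = -q < 0` and `G 1 = p + q + 48 > 0`, while the
leading coefficient `-p` forces `G → -∞`; the intermediate value theorem gives a root in `(0, 1)`
and one in `(1, ∞)`.

Uniqueness on `(0, 1]` holds because `G` is strictly increasing there (`quartic_lt_of_le_one`).
On `[1, ∞)` the function `G x / x⁴` is a polynomial in `y = 1 / x ∈ (0, 1]` of the same shape
with `p` and `q` exchanged, hence strictly decreasing in `x` (`quartic_div_lt_of_one_le`).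
-/

/-- The quartic `G` in terms of `p = -(24 + 3C + 8λ)` and `q = -(24 - 3C + 8λ)`. -/
def quartic (p q x : ℝ) : ℝ := p * (2 * x ^ 3 - x ^ 4) + 48 * x ^ 2 + q * (2 * x - 1)

lemma quartic_lt_of_le_one {p q x y : ℝ} (hp : 0 < p) (hq : 0 < q) (hx : 0 < x) (hxy : x < y)
    (hy : y ≤ 1) : quartic p q x < quartic p q y := by
  have h1 : 0 ≤ 2 * (x ^ 2 + x * y + y ^ 2) - (x + y) * (x ^ 2 + y ^ 2) := by
    have hy0 : 0 < y := hx.trans hxy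
    have : 0 ≤ (2 - (x + y)) * (x ^ 2 + y ^ 2) := mul_nonneg (by linarith) (by positivity)
    nlinarith [mul_pos hx hy0]
  have h2 : 0 < (y - x) * (p * (2 * (x ^ 2 + x * y + y ^ 2) - (x + y) * (x ^ 2 + y ^ 2))
      + 48 * (x + y) + 2 * q) := by
    refine mul_pos (by linarith) ?_
    have := mul_nonneg hp.le h1
    linarith
  have h3 : quartic p q y - quartic p q x =
      (y - x) * (p * (2 * (x ^ 2 + x * y + y ^ 2) - (x + y) * (x ^ 2 + y ^ 2))
      + 48 * (x + y) + 2 * q) := by unfold quartic; ring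
  linarith

/-- `quartic p q x / x ^ 4` is strictly decreasing on `[1, ∞)`, with denominators cleared. -/
lemma quartic_div_lt_of_one_le {p q x y : ℝ} (hp : 0 < p) (hq : 0 < q) (hx : 1 ≤ x)
    (hxy : x < y) : quartic p q y * x ^ 4 < quartic p q x * y ^ 4 := by
  have hx0 : 0 < x := by linarith
  have hy0 : 0 < y := by linarith
  have h1 : 0 ≤ 2 * x * y * (x ^ 2 + x * y + y ^ 2) - (x + y) * (x ^ 2 + y ^ 2) := by
    have h : 0 ≤ 2 * x * y - (x + y) := by nlinarith
    have : 0 ≤ (2 * x * y - (x + y)) * (x ^ 2 + y ^ 2) := mul_nonneg h (by positivity)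
    nlinarith [sq_nonneg (x * y)]
  have h2 : 0 < (y - x) * (2 * p * x ^ 3 * y ^ 3 + 48 * x ^ 2 * y ^ 2 * (x + y)
      + q * (2 * x * y * (x ^ 2 + x * y + y ^ 2) - (x + y) * (x ^ 2 + y ^ 2))) := by
    refine mul_pos (by linarith) ?_
    have := mul_nonneg hq.le h1
    have : 0 < 2 * p * x ^ 3 * y ^ 3 + 48 * x ^ 2 * y ^ 2 * (x + y) := by positivity
    linarith
  have h3 : quartic p q x * y ^ 4 - quartic p q y * x ^ 4 =
      (y - x) * (2 * p * x ^ 3 * y ^ 3 + 48 * x ^ 2 * y ^ 2 * (x + y)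
      + q * (2 * x * y * (x ^ 2 + x * y + y ^ 2) - (x + y) * (x ^ 2 + y ^ 2))) := by
    unfold quartic; ring
  linarith

lemma continuous_quartic (p q : ℝ) : Continuous (quartic p q) := by
  unfold quartic; fun_prop

lemma tendsto_quartic {p : ℝ} (q : ℝ) (hp : 0 < p) :
    Filter.Tendsto (quartic p q) Filter.atTop Filter.atBot := by
  -- `G x = x⁴ H(1/x)` where `H` is continuous and `H 0 = -p < 0`.
  let H : ℝ → ℝ := fun y => p * (2 * y - 1) + 48 * y ^ 2 + q * (2 * y ^ 3 - y ^ 4)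
  have hH : Continuous H := by fun_prop
  have hlim : Filter.Tendsto (fun x : ℝ => H x⁻¹) Filter.atTop (nhds (-p)) := by
    have h := (hH.tendsto 0).comp (tendsto_inv_atTop_zero (𝕜 := ℝ))
    have h0 : H 0 = -p := by simp [H]
    rwa [h0] at h
  have h4 : Filter.Tendsto (fun x : ℝ => x ^ 4) Filter.atTop Filter.atTop :=
    Filter.tendsto_pow_atTop (by norm_num)
  refine (h4.atTop_mul_neg (by linarith) hlim).congr' ?_
  filter_upwards [Filter.eventually_gt_atTop (0 : ℝ)] with x hx
  simp only [H, quartic]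
  field_simp

/-- Root counting in the case `a = −1`, `24 + 3C + 8λ < 0`, `C ≥ 0`: the polynomial
`G(x) = (24+3C+8λ)(x⁴−2x³) + 48x² + (24−3C+8λ)(−2x+1)` satisfies `G(0) < 0`,
`G(1) = −16λ > 0`, `G(x) → −∞` as `x → ∞`, and `G` has exactly two positive roots,
one in `(0,1)` and one in `(1,∞)`. -/
theorem root_counting_a_neg_one (C lam : ℝ) (hC : 0 ≤ C)
    (hcase : 24 + 3 * C + 8 * lam < 0)
    (G : ℝ → ℝ)
    (hG : ∀ x : ℝ, G x = (24 + 3 * C + 8 * lam) * (x ^ 4 - 2 * x ^ 3)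
      + 48 * x ^ 2 + (24 - 3 * C + 8 * lam) * (-2 * x + 1)) :
    G 0 < 0 ∧
    G 1 = -16 * lam ∧ 0 < -16 * lam ∧
    Filter.Tendsto G Filter.atTop Filter.atBot ∧
    ∃ x₁ ∈ Set.Ioo (0 : ℝ) 1, ∃ x₂ ∈ Set.Ioi (1 : ℝ),
      {x : ℝ | 0 < x ∧ G x = 0} = {x₁, x₂} := by
  obtain ⟨p, hp⟩ : ∃ p, p = -(24 + 3 * C + 8 * lam) := ⟨_, rfl⟩
  obtain ⟨q, hq⟩ : ∃ q, q = -(24 - 3 * C + 8 * lam) := ⟨_, rfl⟩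
  have hp0 : 0 < p := by linarith
  have hq0 : 0 < q := by linarith
  obtain rfl : G = quartic p q := by
    funext x
    rw [hG, hp, hq, quartic]
    ring
  have hG0 : quartic p q 0 < 0 := by simp [quartic, hq0]
  have hG1 : quartic p q 1 = -16 * lam := by rw [quartic, hp, hq]; ring
  have hlam : 0 < -16 * lam := by linarith
  have hlim := tendsto_quartic q hp0
  refine ⟨hG0, hG1, hlam, hlim, ?_⟩
  obtain ⟨x₁, hx₁, hr₁⟩ := intermediate_value_Ioo zero_le_one
    (continuous_quartic p q).continuousOn (show (0 : ℝ) ∈ Set.Ioo _ _ from ⟨hG0, hG1 ▸ hlam⟩)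
  obtain ⟨b, hb, hb1⟩ :=
    ((hlim.eventually_lt_atBot 0).and (Filter.eventually_gt_atTop 1)).exists
  obtain ⟨x₂, hx₂, hr₂⟩ := intermediate_value_Ioo' hb1.le
    (continuous_quartic p q).continuousOn (show (0 : ℝ) ∈ Set.Ioo _ _ from ⟨hb, hG1 ▸ hlam⟩)
  refine ⟨x₁, hx₁, x₂, hx₂.1, ?_⟩
  ext x
  simp only [Set.mem_ofPred_eq, Set.mem_insert_iff, Set.mem_singleton_iff]
  constructor
  · rintro ⟨hx, hr⟩
    rcases le_total x 1 with h | h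
    · left
      rcases lt_trichotomy x x₁ with h' | h' | h'
      · have := quartic_lt_of_le_one hp0 hq0 hx h' hx₁.2.le
        linarith
      · exact h'
      · have := quartic_lt_of_le_one hp0 hq0 hx₁.1 h' h
        linarith
    · right
      rcases lt_trichotomy x x₂ with h' | h' | h'
      · have := quartic_div_lt_of_one_le hp0 hq0 h h'
        simp [hr, hr₂] at this
      · exact h'
      · have := quartic_div_lt_of_one_le hp0 hq0 hx₂.1.le h'
        simp [hr, hr₂] at this
  · rintro (rfl | rfl)
    · exact ⟨hx₁.1, hr₁⟩
    · exact ⟨zero_lt_one.trans hx₂.1, hr₂⟩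
end
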